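/- arXiv:1803.08621 — 3 statements merged into one kernel-verified Lean document; each statement's English description precedes it below -/
import Mathlib

section
/- Let M be a monoid, P a type, g : P → M, t₀ ∈ M, and let l be a list of elements of P of length n = b·r with b ≥ 1 and r ≥ 1. For each i < b let ρᵢ = (((l.drop (i·r)).take r).map g).prod be the folded value of the i-th block. Suppose t : ℕ → M satisfies: (1) t(0) = t₀; (2) for every i < b, t((i+1)·r) = t(i·r) * ρᵢ; and (3) for every i < b and every j with i·r < j < (i+1)·r, t(j) = t(j−1) * g(l[j−1]). Then for every j ≤ b·r, t(j) = t₀ * (((l.take j).map g).prod); that is, the three-step algorithm computes exactly the prefix folds of the sequence. -/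
/-! Since a monoid acts on the prefix structures, those of lengths `m` and `m + n` differ by the
folded value of the `n` elements in between. Taking `n = r` gives the prefix structures at the block
boundaries by induction on the number of blocks; taking `n = 1` gives those inside a block, by
induction from its left boundary. -/

section PrefixStructure

open scoped RightActions

variable {M T : Type*} [Monoid M] [MulAction Mᵐᵒᵖ T]

/-- The prefix structure of the first `j` elements of a sequence of augmented values, starting from
`t₀`. Prefix structures live in a right `M`-set `T`; the action `t <• m` is the combine function. -/
def prefixStructure (t₀ : T) (a : List M) (j : ℕ) : T :=
  t₀ <• (a.take j).prod

theorem prefixStructure_zero (t₀ : T) (a : List M) : prefixStructure t₀ a 0 = t₀ := by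
  simp [prefixStructure]

theorem prefixStructure_add (t₀ : T) (a : List M) (m n : ℕ) :
    prefixStructure t₀ a (m + n) = prefixStructure t₀ a m <• ((a.drop m).take n).prod := by
  simp only [prefixStructure, List.take_add, List.prod_append, MulOpposite.op_mul, mul_smul]

theorem prefixStructure_succ (t₀ : T) {a : List M} {j : ℕ} (hj : j < a.length) :
    prefixStructure t₀ a (j + 1) = prefixStructure t₀ a j <• a[j] := by
  simp only [prefixStructure, List.prod_take_succ a j hj, MulOpposite.op_mul, mul_smul]

variable {t₀ : T} {a : List M} {t : ℕ → T}

theorem eq_prefixStructure_of_sweep {b r : ℕ} (h0 : t 0 = t₀)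
    (hsweep : ∀ i < b, t ((i + 1) * r) = t (i * r) <• ((a.drop (i * r)).take r).prod) :
    ∀ i ≤ b, t (i * r) = prefixStructure t₀ a (i * r) := by
  intro i hi
  induction i with
  | zero => rw [Nat.zero_mul, h0, prefixStructure_zero]
  | succ i ih => rw [hsweep i hi, ih (Nat.le_of_succ_le hi), Nat.succ_mul, prefixStructure_add]

theorem eq_prefixStructure_of_refine {m n : ℕ} (hn : n ≤ a.length)
    (hm : t m = prefixStructure t₀ a m)
    (hrefine : ∀ j, m ≤ j → ∀ _ : j + 1 < n, t (j + 1) = t j <• a[j]) :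
    ∀ j, m ≤ j → j < n → t j = prefixStructure t₀ a j := by
  intro j hmj hjn
  induction j, hmj using Nat.le_induction with
  | base => exact hm
  | succ j hmj ih => rw [hrefine j hmj hjn, ih (by omega), prefixStructure_succ]

theorem sweepline_paradigm_correct_general {b r : ℕ} (hlen : b * r ≤ a.length) (h0 : t 0 = t₀)
    (hsweep : ∀ i < b, t ((i + 1) * r) = t (i * r) <• ((a.drop (i * r)).take r).prod)
    (hrefine : ∀ i, ∀ _ : i < b, ∀ j, i * r ≤ j → ∀ _ : j + 1 < (i + 1) * r,
      t (j + 1) = t j <• a[j]'(by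
        have hend : (i + 1) * r ≤ b * r := Nat.mul_le_mul_right r ‹i < b›
        omega)) :
    ∀ j ≤ b * r, t j = prefixStructure t₀ a j := by
  intro j hj
  have boundary := eq_prefixStructure_of_sweep h0 hsweep
  obtain rfl | hj := hj.eq_or_lt
  · exact boundary b le_rfl
  have hr : 0 < r := Nat.pos_of_lt_mul_left hj
  have hblock : j / r < b := (Nat.div_lt_iff_lt_mul hr).2 hj
  have hend : (j / r + 1) * r ≤ a.length := (Nat.mul_le_mul_right r hblock).trans hlen
  exact eq_prefixStructure_of_refine hend (boundary _ hblock.le) (hrefine _ hblock) j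
    (Nat.div_mul_le_self j r) ((Nat.div_lt_iff_lt_mul hr).1 (Nat.lt_succ_self _))

end PrefixStructure

theorem sweepline_paradigm_correct {M : Type*} [Monoid M] {P : Type*}
    (g : P → M) (t₀ : M) (b r : ℕ) (hb : 1 ≤ b) (hr : 1 ≤ r)
    (l : List P) (hl : l.length = b * r)
    (t : ℕ → M)
    (h0 : t 0 = t₀)
    (hsweep : ∀ i < b,
      t ((i + 1) * r) = t (i * r) * (((l.drop (i * r)).take r).map g).prod)
    (hrefine : ∀ i, ∀ _ : i < b, ∀ j, ∀ _ : i * r < j, ∀ hj2 : j < (i + 1) * r,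
      t j = t (j - 1) * g (l.get ⟨j - 1, by
        have h1 : (i + 1) * r ≤ b * r := Nat.mul_le_mul_right r ‹i < b›
        rw [hl]; omega⟩)) :
    ∀ j ≤ b * r, t j = t₀ * ((l.take j).map g).prod := by
  simp only [List.map_take, List.map_drop] at hsweep ⊢
  exact sweepline_paradigm_correct_general (a := l.map g) (by rw [List.length_map, hl])
    h0 hsweep fun i hi j hij hj => by simpa using hrefine i hi (j + 1) (Nat.lt_succ_of_le hij) hj
end

section
/- Let S be a set of segments, and let l, r : S → ℝ assign to each segment the x-coordinates of its left and right endpoints. For reals a ≤ b define the left-open set L(S,a,b) = {s ∈ S | l(s) ≤ a ∧ a < r(s) ≤ b} and the right-open set R(S,a,b) = {s ∈ S | a < l(s) ≤ b ∧ b < r(s)}. Then for all reals a ≤ m ≤ b: L(S,a,b) = L(S,a,m) ∪ (L(S,m,b) \ R(S,a,m)) and R(S,a,b) = R(S,m,b) ∪ (R(S,a,m) \ L(S,m,b)). -/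
/-!
Cut `L(a, b)` according to whether a segment ends before or after `m`. Those ending in `(a, m]` form
`L(a, m)`. Those ending in `(m, b]` also belong to `L(m, b)`, whose other members start in `(a, m]`
and end after `m`, hence are exactly the ones that lie in `R(a, m)`. The set `R(a, b)` is cut in the
same way, at `m`, by left endpoints.
-/

open Set

section OpenSets

variable {σ α : Type*}

/-- The left-open set of the interval `(a, b]`: the segments of `S` that start outside on the left
and end inside. A segment `s` is encoded by its endpoints `l s` and `r s`, with no order imposed
between them. -/
def leftOpenSet [Preorder α] (S : Set σ) (l r : σ → α) (a b : α) : Set σ :=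
  {s ∈ S | l s ≤ a ∧ r s ∈ Ioc a b}

/-- The right-open set of the interval `(a, b]`: the segments of `S` that start inside and end
outside on the right, with segments encoded as in `leftOpenSet`. -/
def rightOpenSet [Preorder α] (S : Set σ) (l r : σ → α) (a b : α) : Set σ :=
  {s ∈ S | l s ∈ Ioc a b ∧ b < r s}

variable [LinearOrder α] (S : Set σ) (l r : σ → α) {a m b : α}

theorem leftOpenSet_diff_rightOpenSet (ham : a ≤ m) :
    leftOpenSet S l r m b \ rightOpenSet S l r a m = {s ∈ S | l s ≤ a ∧ r s ∈ Ioc m b} := by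
  ext s
  constructor
  · rintro ⟨⟨hs, hlm, hr⟩, hnot⟩
    exact ⟨hs, not_lt.mp fun hal => hnot ⟨hs, ⟨hal, hlm⟩, hr.1⟩, hr⟩
  · rintro ⟨hs, hla, hr⟩
    exact ⟨⟨hs, hla.trans ham, hr⟩, fun hR => hla.not_gt hR.2.1.1⟩

theorem rightOpenSet_diff_leftOpenSet (hmb : m ≤ b) :
    rightOpenSet S l r a m \ leftOpenSet S l r m b = {s ∈ S | l s ∈ Ioc a m ∧ b < r s} := by
  ext s
  constructor
  · rintro ⟨⟨hs, hl, hmr⟩, hnot⟩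
    exact ⟨hs, hl, not_le.mp fun hrb => hnot ⟨hs, hl.2, hmr, hrb⟩⟩
  · rintro ⟨hs, hl, hbr⟩
    exact ⟨⟨hs, hl, hmb.trans_lt hbr⟩, fun hL => hbr.not_ge hL.2.2.2⟩

theorem leftOpenSet_eq_union (ham : a ≤ m) (hmb : m ≤ b) :
    leftOpenSet S l r a b =
      leftOpenSet S l r a m ∪ (leftOpenSet S l r m b \ rightOpenSet S l r a m) := by
  rw [leftOpenSet_diff_rightOpenSet S l r ham]
  ext s
  simp only [leftOpenSet, mem_union, mem_ofPred_eq, ← Ioc_union_Ioc_eq_Ioc ham hmb, and_or_left]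

theorem rightOpenSet_eq_union (ham : a ≤ m) (hmb : m ≤ b) :
    rightOpenSet S l r a b =
      rightOpenSet S l r m b ∪ (rightOpenSet S l r a m \ leftOpenSet S l r m b) := by
  rw [rightOpenSet_diff_leftOpenSet S l r hmb, union_comm]
  ext s
  simp only [rightOpenSet, mem_union, mem_ofPred_eq, ← Ioc_union_Ioc_eq_Ioc ham hmb, or_and_right,
    and_or_left]

theorem seg_combine_correct_general (ham : a ≤ m) (hmb : m ≤ b) :
    leftOpenSet S l r a b =
        leftOpenSet S l r a m ∪ (leftOpenSet S l r m b \ rightOpenSet S l r a m) ∧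
      rightOpenSet S l r a b =
        rightOpenSet S l r m b ∪ (rightOpenSet S l r a m \ leftOpenSet S l r m b) :=
  ⟨leftOpenSet_eq_union S l r ham hmb, rightOpenSet_eq_union S l r ham hmb⟩

end OpenSets

theorem seg_combine_correct {σ : Type*} (S : Set σ) (l r : σ → ℝ)
    (L R : ℝ → ℝ → Set σ)
    (hL : ∀ a b : ℝ, a ≤ b → L a b = {s ∈ S | l s ≤ a ∧ a < r s ∧ r s ≤ b})
    (hR : ∀ a b : ℝ, a ≤ b → R a b = {s ∈ S | a < l s ∧ l s ≤ b ∧ b < r s})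
    (a m b : ℝ) (ham : a ≤ m) (hmb : m ≤ b) :
    L a b = L a m ∪ (L m b \ R a m) ∧ R a b = R m b ∪ (R a m \ L m b) := by
  have hL' : ∀ {x y : ℝ}, x ≤ y → L x y = leftOpenSet S l r x y := fun {x y} hxy => hL x y hxy
  have hR' : ∀ {x y : ℝ}, x ≤ y → R x y = rightOpenSet S l r x y := fun {x y} hxy => by
    simp only [hR x y hxy, rightOpenSet, mem_Ioc, and_assoc]
  simpa only [hL' ham, hL' hmb, hL' (ham.trans hmb), hR' ham, hR' hmb, hR' (ham.trans hmb)] using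
    seg_combine_correct_general S l r ham hmb
end

section
/- Let S be a set of segments with l, r : S → ℝ assigning the x-coordinates of the left and right endpoints of each segment. Then for all reals a, m, q, b with a ≤ m, m < q, and q ≤ b: {s ∈ S | l(s) < q ∧ q < r(s) ∧ (a < l(s) ≤ b ∨ a < r(s) ≤ b)} = {s ∈ S | a < l(s) ≤ m ∧ b < r(s)} ∪ {s ∈ S | l(s) < q ∧ q < r(s) ∧ (m < l(s) ≤ b ∨ m < r(s) ≤ b)}. -/
/-!
A segment crossing `q` has its right endpoint beyond `m`. If that endpoint is at most `b`, it lies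
in `(m, b]`; otherwise only the position of the left endpoint relative to `m` matters. Conversely, a
segment from `(a, m]` to beyond `b` crosses every `q` in `(m, b]`.
-/

section Endpoints

variable {α : Type*} [LinearOrder α] {a m q b x y : α}

theorem endpoint_mem_Ioc_iff (ham : a ≤ m) (hmb : m ≤ b) (hmy : m < y) :
    (x ∈ Set.Ioc a b ∨ y ∈ Set.Ioc a b) ↔
      (x ∈ Set.Ioc a m ∧ b < y) ∨ (x ∈ Set.Ioc m b ∨ y ∈ Set.Ioc m b) := by
  have left_split : x ∈ Set.Ioc a b ↔ x ∈ Set.Ioc a m ∨ x ∈ Set.Ioc m b := by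
    rw [← Set.Ioc_union_Ioc_eq_Ioc ham hmb, Set.mem_union]
  have right_mem {c : α} (hcm : c ≤ m) : y ∈ Set.Ioc c b ↔ y ≤ b :=
    and_iff_right (hcm.trans_lt hmy)
  rw [left_split, right_mem ham, right_mem le_rfl]
  rcases le_or_gt y b with hyb | hby
  · simp only [hyb, or_true]
  · simp only [hby, hby.not_ge, or_false, and_true]

theorem mem_Ioo_and_endpoint_mem_Ioc_iff (ham : a ≤ m) (hmq : m < q) (hqb : q ≤ b) :
    (q ∈ Set.Ioo x y ∧ (x ∈ Set.Ioc a b ∨ y ∈ Set.Ioc a b)) ↔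
      (x ∈ Set.Ioc a m ∧ b < y) ∨
        (q ∈ Set.Ioo x y ∧ (x ∈ Set.Ioc m b ∨ y ∈ Set.Ioc m b)) := by
  have crosses : x ∈ Set.Ioc a m ∧ b < y → q ∈ Set.Ioo x y :=
    fun ⟨hx, hby⟩ => ⟨hx.2.trans_lt hmq, hqb.trans_lt hby⟩
  calc
    _ ↔ q ∈ Set.Ioo x y ∧
          ((x ∈ Set.Ioc a m ∧ b < y) ∨ (x ∈ Set.Ioc m b ∨ y ∈ Set.Ioc m b)) :=
      and_congr_right fun hq =>
        endpoint_mem_Ioc_iff ham (hmq.le.trans hqb) (hmq.trans hq.2)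
    _ ↔ (q ∈ Set.Ioo x y ∧ (x ∈ Set.Ioc a m ∧ b < y)) ∨
          (q ∈ Set.Ioo x y ∧ (x ∈ Set.Ioc m b ∨ y ∈ Set.Ioc m b)) := and_or_left
    _ ↔ _ := by rw [and_iff_right_of_imp crosses]

end Endpoints

theorem segtree_query_correct_general {σ α : Type*} [LinearOrder α] (S : Set σ) (l r : σ → α)
    {a m q b : α} (ham : a ≤ m) (hmq : m < q) (hqb : q ≤ b) :
    {s ∈ S | l s < q ∧ q < r s ∧ ((a < l s ∧ l s ≤ b) ∨ (a < r s ∧ r s ≤ b))}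
      = {s ∈ S | a < l s ∧ l s ≤ m ∧ b < r s}
        ∪ {s ∈ S | l s < q ∧ q < r s ∧ ((m < l s ∧ l s ≤ b) ∨ (m < r s ∧ r s ≤ b))} := by
  ext s
  simpa only [Set.mem_union, Set.mem_ofPred_eq, Set.mem_Ioo, Set.mem_Ioc, and_assoc, ← and_or_left]
    using and_congr_right fun _ : s ∈ S =>
      mem_Ioo_and_endpoint_mem_Ioc_iff (x := l s) (y := r s) ham hmq hqb

theorem segtree_query_correct {σ : Type*} (S : Set σ) (l r : σ → ℝ)
    (a m q b : ℝ) (ham : a ≤ m) (hmq : m < q) (hqb : q ≤ b) :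
    {s ∈ S | l s < q ∧ q < r s ∧ ((a < l s ∧ l s ≤ b) ∨ (a < r s ∧ r s ≤ b))}
      = {s ∈ S | a < l s ∧ l s ≤ m ∧ b < r s}
        ∪ {s ∈ S | l s < q ∧ q < r s ∧ ((m < l s ∧ l s ≤ b) ∨ (m < r s ∧ r s ≤ b))} :=
  segtree_query_correct_general S l r ham hmq hqb
end
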